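/- arXiv:1903.03812 — 7 statements merged into one kernel-verified Lean document; each statement's English description precedes it below -/
import Mathlib

section
/- For every real w with 0 < w ≤ w*, the operator H_w is a max-norm contraction with contraction factor (w·α + 1 − w): for all P, Q : S×A → ℝ, ‖H_w P − H_w Q‖ ≤ (w·α + 1 − w)·‖P − Q‖. -/
open Finset

/-- Maximum of a real-valued function over a nonempty finite type. -/
noncomputable def fmax {A : Type*} [Fintype A] [Nonempty A] (f : A → ℝ) : ℝ :=
  Finset.univ.sup' Finset.univ_nonempty f

/-- Sup (maximum-absolute-value) norm of a real-valued function on a nonempty finite type. -/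
noncomputable def supNorm {I : Type*} [Fintype I] [Nonempty I] (f : I → ℝ) : ℝ :=
  fmax (fun i => |f i|)

/-- The over-relaxation bound `w* = min_{(i,a)} 1/(1 - α p(i|i,a))`. -/
noncomputable def wstar {S A : Type*} [Fintype S] [Fintype A] [Nonempty S] [Nonempty A]
    (p : S → A → S → ℝ) (α : ℝ) : ℝ :=
  Finset.univ.inf' Finset.univ_nonempty (fun ia : S × A => 1 / (1 - α * p ia.1 ia.2 ia.1))

/-- The SOR Q-Bellman operator `H_w`. -/
noncomputable def Hw {S A : Type*} [Fintype S] [Fintype A] [Nonempty S] [Nonempty A]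
    (p : S → A → S → ℝ) (r : S → A → ℝ) (α w : ℝ) (Q : S → A → ℝ) : S → A → ℝ :=
  fun i a => w * (r i a + α * ∑ j, p i a j * fmax (Q j)) + (1 - w) * fmax (Q i)

theorem fmax_sub_le {A : Type*} [Fintype A] [Nonempty A] (f g : A → ℝ) (N : ℝ)
    (h : ∀ a, f a - g a ≤ N) : fmax f - fmax g ≤ N := by
  have : fmax f ≤ N + fmax g := by
    unfold fmax
    apply Finset.sup'_le
    intro a _
    have h1 := Finset.le_sup' g (Finset.mem_univ a)
    linarith [h a]
  linarith

theorem key_bound {S : Type*} [Fintype S] (q d : S → ℝ) (α w N : ℝ) (i : S)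
    (hq : ∀ j, 0 ≤ q j) (hs : ∑ j, q j = 1) (hα0 : 0 ≤ α) (hw0 : 0 < w)
    (hc : 0 ≤ 1 - w + w * α * q i) (hd : ∀ j, d j ≤ N) :
    w * α * ∑ j, q j * d j + (1 - w) * d i ≤ (w * α + 1 - w) * N := by
  have h1 : q i * (N - d i) ≤ ∑ j, q j * (N - d j) :=
    Finset.single_le_sum (f := fun j => q j * (N - d j))
      (fun j _ => mul_nonneg (hq j) (sub_nonneg.2 (hd j))) (Finset.mem_univ i)
  have h2 : ∑ j, q j * (N - d j) = N - ∑ j, q j * d j := by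
    simp only [mul_sub, Finset.sum_sub_distrib, ← Finset.sum_mul, hs, one_mul]
  rw [h2] at h1
  have h3 := mul_le_mul_of_nonneg_left h1 (mul_nonneg hw0.le hα0)
  have h4 := mul_nonneg hc (sub_nonneg.2 (hd i))
  nlinarith

/-- For `0 < w ≤ w*`, the SOR Q-Bellman operator `H_w` is a max-norm contraction with
contraction factor `w·α + 1 - w`. -/
theorem Hw_contraction {S A : Type*} [Fintype S] [Fintype A] [Nonempty S] [Nonempty A]
    (p : S → A → S → ℝ) (r : S → A → ℝ) (α : ℝ)
    (hp : ∀ i a j, 0 ≤ p i a j) (hsum : ∀ i a, ∑ j, p i a j = 1)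
    (hα0 : 0 ≤ α) (hα1 : α < 1)
    (w : ℝ) (hw0 : 0 < w) (hw : w ≤ wstar p α) :
    ∀ P Q : S → A → ℝ,
      supNorm (fun ia : S × A => Hw p r α w P ia.1 ia.2 - Hw p r α w Q ia.1 ia.2) ≤
        (w * α + 1 - w) * supNorm (fun ia : S × A => P ia.1 ia.2 - Q ia.1 ia.2) := by
  intro P Q
  set N := supNorm (fun ia : S × A => P ia.1 ia.2 - Q ia.1 ia.2) with hN
  have hle : ∀ j b, |P j b - Q j b| ≤ N := fun j b =>
    Finset.le_sup' (fun ia : S × A => |P ia.1 ia.2 - Q ia.1 ia.2|) (Finset.mem_univ (j, b))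
  have hd1 : ∀ j, fmax (P j) - fmax (Q j) ≤ N := fun j =>
    fmax_sub_le _ _ _ fun b => (abs_le.1 (hle j b)).2
  have hd2 : ∀ j, fmax (Q j) - fmax (P j) ≤ N := fun j =>
    fmax_sub_le _ _ _ fun b => by linarith [(abs_le.1 (hle j b)).1]
  unfold supNorm fmax
  apply Finset.sup'_le
  rintro ⟨i, a⟩ _
  have hp1 : p i a i ≤ 1 := by
    rw [← hsum i a]
    exact Finset.single_le_sum (fun j _ => hp i a j) (Finset.mem_univ i)
  have hpos : 0 < 1 - α * p i a i := by nlinarith [hp i a i]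
  have hwi : w ≤ 1 / (1 - α * p i a i) :=
    hw.trans (Finset.inf'_le (fun ia : S × A => 1 / (1 - α * p ia.1 ia.2 ia.1))
      (Finset.mem_univ (i, a)))
  rw [le_div_iff₀ hpos] at hwi
  have hc : 0 ≤ 1 - w + w * α * p i a i := by linarith
  have k1 := key_bound (p i a) _ α w N i (hp i a) (hsum i a) hα0 hw0 hc hd1
  have k2 := key_bound (p i a) _ α w N i (hp i a) (hsum i a) hα0 hw0 hc hd2
  simp only [mul_sub, Finset.sum_sub_distrib] at k1 k2
  simp only [Hw]
  rw [abs_le]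
  constructor <;> linarith
end

section
/- For every real w with 0 < w ≤ w*, the operator H_w has exactly one fixed point: there exists a unique Q* : S×A → ℝ with H_w Q* = Q*. -/
open Finset

theorem fmax_le_add {A : Type*} [Fintype A] [Nonempty A] (f g : A → ℝ) (D : ℝ)
    (h : ∀ a, f a ≤ g a + D) : fmax f ≤ fmax g + D := by
  unfold fmax
  apply Finset.sup'_le
  intro a ha
  have := Finset.le_sup' g ha
  linarith [h a]

theorem Hw_one_sided {S A : Type*} [Fintype S] [Fintype A]
    [Nonempty S] [Nonempty A]
    (p : S → A → S → ℝ) (r : S → A → ℝ) (α : ℝ)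
    (hp : ∀ i a j, 0 ≤ p i a j) (hsum : ∀ i a, ∑ j, p i a j = 1)
    (hα0 : 0 ≤ α) (w : ℝ) (hw0 : 0 < w)
    (hk : ∀ i a, 0 ≤ 1 - w + w * α * p i a i) (Q R : S → A → ℝ) (D : ℝ)
    (h : ∀ i a, Q i a ≤ R i a + D) (i : S) (a : A) :
    Hw p r α w Q i a ≤ Hw p r α w R i a + (1 - w + w * α) * D := by
  have hd : ∀ j, 0 ≤ D - (fmax (Q j) - fmax (R j)) := fun j => by
    linarith [fmax_le_add (Q j) (R j) D (h j)]
  have h1 : p i a i * (D - (fmax (Q i) - fmax (R i)))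
      ≤ ∑ j, p i a j * (D - (fmax (Q j) - fmax (R j))) :=
    Finset.single_le_sum (f := fun j => p i a j * (D - (fmax (Q j) - fmax (R j))))
      (fun j _ => mul_nonneg (hp i a j) (hd j)) (Finset.mem_univ i)
  have h2 : ∑ j, p i a j * (D - (fmax (Q j) - fmax (R j)))
      = D - (∑ j, p i a j * fmax (Q j) - ∑ j, p i a j * fmax (R j)) := by
    simp only [mul_sub, Finset.sum_sub_distrib, ← Finset.sum_mul, hsum, one_mul]
  rw [h2] at h1
  have h3 := mul_le_mul_of_nonneg_left h1 (mul_nonneg hw0.le hα0)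
  have h4 := mul_nonneg (hk i a) (hd i)
  unfold Hw
  linarith

/-- For `0 < w ≤ w*`, the operator `H_w` has exactly one fixed point. -/
theorem Hw_exists_unique_fixed_point {S A : Type*} [Fintype S] [Fintype A]
    [Nonempty S] [Nonempty A]
    (p : S → A → S → ℝ) (r : S → A → ℝ) (α : ℝ)
    (hp : ∀ i a j, 0 ≤ p i a j) (hsum : ∀ i a, ∑ j, p i a j = 1)
    (hα0 : 0 ≤ α) (hα1 : α < 1)
    (w : ℝ) (hw0 : 0 < w) (hw : w ≤ wstar p α) :
    ∃! Qstar : S → A → ℝ, Hw p r α w Qstar = Qstar := by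
  have hle : ∀ i a, p i a i ≤ 1 := fun i a => by
    rw [← hsum i a]
    exact Finset.single_le_sum (fun j _ => hp i a j) (Finset.mem_univ i)
  have hk : ∀ i a, 0 ≤ 1 - w + w * α * p i a i := fun i a => by
    have h1 : w ≤ 1 / (1 - α * p i a i) :=
      hw.trans (Finset.inf'_le (fun ia : S × A => 1 / (1 - α * p ia.1 ia.2 ia.1))
        (Finset.mem_univ (i, a)))
    have h2 : 0 < 1 - α * p i a i := by nlinarith [hle i a]
    rw [le_div_iff₀ h2] at h1
    linarith
  have hK0 : 0 ≤ 1 - w + w * α := by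
    obtain ⟨i⟩ := (inferInstance : Nonempty S)
    obtain ⟨a⟩ := (inferInstance : Nonempty A)
    nlinarith [hk i a, mul_le_mul_of_nonneg_left (hle i a) (mul_nonneg hw0.le hα0)]
  have hK1 : 1 - w + w * α < 1 := by nlinarith
  have hdist : ∀ (Q R : S → A → ℝ) i a, Q i a ≤ R i a + dist Q R := fun Q R i a => by
    have h1 := (dist_le_pi_dist (Q i) (R i) a).trans (dist_le_pi_dist Q R i)
    rw [Real.dist_eq] at h1
    linarith [le_abs_self (Q i a - R i a)]
  have hc : ContractingWith ⟨1 - w + w * α, hK0⟩ (Hw p r α w) := by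
    refine ⟨by exact_mod_cast hK1, LipschitzWith.of_dist_le_mul fun Q R => ?_⟩
    have hnn : 0 ≤ (1 - w + w * α) * dist Q R := mul_nonneg hK0 dist_nonneg
    refine (dist_pi_le_iff hnn).2 fun i => (dist_pi_le_iff hnn).2 fun a => ?_
    have e1 := Hw_one_sided p r α hp hsum hα0 w hw0 hk Q R _ (hdist Q R) i a
    have e2 := Hw_one_sided p r α hp hsum hα0 w hw0 hk R Q _ (hdist R Q) i a
    rw [dist_comm R Q] at e2
    rw [Real.dist_eq, abs_le]
    constructor <;> linarith
  exact ⟨ContractingWith.fixedPoint _ hc, hc.fixedPoint_isFixedPt,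
    fun Q hQ => hc.fixedPoint_unique hQ⟩
end

section
/- Let w > 0, let V : S → ℝ satisfy the Bellman equation V(i) = max_{a∈A} (r(i,a) + α ∑_{j∈S} p(j|i,a)·V(j)) for all i ∈ S, and define Q*(i,a) := w·(r(i,a) + α ∑_{j∈S} p(j|i,a)·V(j)) + (1−w)·V(i). Then Q* is a fixed point of H_w, i.e., H_w Q* = Q*. -/
open Finset

/-- If `V` satisfies the Bellman equation and `Q*` is defined by the SOR construction,
then `Q*` is a fixed point of `H_w`. -/
theorem Qstar_fixed_point {S A : Type*} [Fintype S] [Fintype A] [Nonempty S] [Nonempty A]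
    (p : S → A → S → ℝ) (r : S → A → ℝ) (α : ℝ)
    (hp : ∀ i a j, 0 ≤ p i a j) (hsum : ∀ i a, ∑ j, p i a j = 1)
    (hα0 : 0 ≤ α) (hα1 : α < 1)
    (w : ℝ) (hw0 : 0 < w)
    (V : S → ℝ)
    (hV : ∀ i, V i = fmax (fun a => r i a + α * ∑ j, p i a j * V j))
    (Qstar : S → A → ℝ)
    (hQ : ∀ i a, Qstar i a = w * (r i a + α * ∑ j, p i a j * V j) + (1 - w) * V i) :
    Hw p r α w Qstar = Qstar := by
  have hmax : ∀ i, fmax (Qstar i) = V i := by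
    intro i
    apply le_antisymm
    · refine Finset.sup'_le _ _ fun a _ => ?_
      have h : r i a + α * ∑ j, p i a j * V j ≤ V i := by
        rw [hV i]
        exact Finset.le_sup' (fun a => r i a + α * ∑ j, p i a j * V j) (Finset.mem_univ a)
      rw [hQ]
      nlinarith
    · obtain ⟨a, _, ha⟩ := Finset.exists_mem_eq_sup' (Finset.univ_nonempty (α := A))
        (fun a => r i a + α * ∑ j, p i a j * V j)
      have h : V i = r i a + α * ∑ j, p i a j * V j := (hV i).trans ha
      have h2 : Qstar i a = V i := by
        rw [hQ, ← h]; ring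
      rw [← h2]
      exact Finset.le_sup' (Qstar i) (Finset.mem_univ a)
  funext i a
  simp only [Hw, hmax, hQ]
end

section
/- Let 0 < w ≤ w*, let Q : S×A → ℝ be a fixed point of the Q-Bellman operator H (H Q = Q), and let Q' : S×A → ℝ be a fixed point of H_w (H_w Q' = Q'). Then for every state i ∈ S and every action c ∈ A with Q(i,c) = max_{b∈A} Q(i,b), one has Q'(i,c) = Q(i,c). -/
open Finset

/-- The standard Q-Bellman operator `H`. -/
noncomputable def Hop {S A : Type*} [Fintype S] [Fintype A] [Nonempty S] [Nonempty A]
    (p : S → A → S → ℝ) (r : S → A → ℝ) (α : ℝ) (Q : S → A → ℝ) : S → A → ℝ :=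
  fun i a => r i a + α * ∑ j, p i a j * fmax (Q j)

lemma le_fmax_aux {A : Type*} [Fintype A] [Nonempty A] (f : A → ℝ) (a : A) : f a ≤ fmax f :=
  Finset.le_sup' f (Finset.mem_univ a)

lemma exists_fmax_aux {A : Type*} [Fintype A] [Nonempty A] (f : A → ℝ) : ∃ a, f a = fmax f := by
  obtain ⟨a, -, h⟩ := Finset.exists_mem_eq_sup' (Finset.univ_nonempty (α := A)) f
  exact ⟨a, h.symm⟩

lemma bellman_le_aux {S A : Type*} [Fintype S] [Nonempty S]
    (p : S → A → S → ℝ) (r : S → A → ℝ) (α : ℝ)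
    (hp : ∀ i a j, 0 ≤ p i a j) (hsum : ∀ i a, ∑ j, p i a j = 1)
    (hα0 : 0 ≤ α) (hα1 : α < 1) (U V : S → ℝ)
    (hU : ∀ i, ∃ a, U i = r i a + α * ∑ j, p i a j * U j)
    (hV : ∀ i a, r i a + α * ∑ j, p i a j * V j ≤ V i) : ∀ i, U i ≤ V i := by
  obtain ⟨m, hm⟩ := Finite.exists_max (fun i => U i - V i)
  obtain ⟨a, ha⟩ := hU m
  have h1 := hV m a
  have h2 : ∑ j, p m a j * U j - ∑ j, p m a j * V j ≤ U m - V m := by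
    calc ∑ j, p m a j * U j - ∑ j, p m a j * V j = ∑ j, p m a j * (U j - V j) := by
          rw [← Finset.sum_sub_distrib]
          exact Finset.sum_congr rfl fun j _ => by ring
      _ ≤ ∑ j, p m a j * (U m - V m) :=
          Finset.sum_le_sum fun j _ => mul_le_mul_of_nonneg_left (hm j) (hp m a j)
      _ = U m - V m := by rw [← Finset.sum_mul, hsum, one_mul]
  have h3 := mul_le_mul_of_nonneg_left h2 hα0
  have h4 : U m - V m ≤ 0 := by
    by_contra h
    push Not at h
    nlinarith
  intro i
  have := hm i
  linarith

/-- If `Q` is a fixed point of `H` and `Q'` a fixed point of `H_w`, then `Q'` agrees with `Q`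
at every maximizing (optimal) action. -/
theorem sor_Q_eq_Q_at_optimal_action {S A : Type*} [Fintype S] [Fintype A]
    [Nonempty S] [Nonempty A]
    (p : S → A → S → ℝ) (r : S → A → ℝ) (α : ℝ)
    (hp : ∀ i a j, 0 ≤ p i a j) (hsum : ∀ i a, ∑ j, p i a j = 1)
    (hα0 : 0 ≤ α) (hα1 : α < 1)
    (w : ℝ) (hw0 : 0 < w) (hw : w ≤ wstar p α)
    (Q : S → A → ℝ) (hQ : Hop p r α Q = Q)
    (Q' : S → A → ℝ) (hQ' : Hw p r α w Q' = Q') :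
    ∀ i c, Q i c = fmax (Q i) → Q' i c = Q i c := by
  have e1 : ∀ i a, r i a + α * ∑ j, p i a j * fmax (Q j) = Q i a :=
    fun i a => congrFun (congrFun hQ i) a
  have e2 : ∀ i a, w * (r i a + α * ∑ j, p i a j * fmax (Q' j)) + (1 - w) * fmax (Q' i) = Q' i a :=
    fun i a => congrFun (congrFun hQ' i) a
  have a1 : ∀ i, ∃ a, fmax (Q i) = r i a + α * ∑ j, p i a j * fmax (Q j) := fun i => by
    obtain ⟨a, h⟩ := exists_fmax_aux (Q i)
    exact ⟨a, by rw [e1, h]⟩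
  have b1 : ∀ i a, r i a + α * ∑ j, p i a j * fmax (Q j) ≤ fmax (Q i) := fun i a => by
    rw [e1]; exact le_fmax_aux _ a
  have a2 : ∀ i, ∃ a, fmax (Q' i) = r i a + α * ∑ j, p i a j * fmax (Q' j) := fun i => by
    obtain ⟨a, h⟩ := exists_fmax_aux (Q' i)
    refine ⟨a, mul_left_cancel₀ hw0.ne' ?_⟩
    have := e2 i a
    linarith
  have b2 : ∀ i a, r i a + α * ∑ j, p i a j * fmax (Q' j) ≤ fmax (Q' i) := fun i a => by
    refine le_of_mul_le_mul_left ?_ hw0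
    have := e2 i a
    have := le_fmax_aux (Q' i) a
    linarith
  have hV : ∀ i, fmax (Q' i) = fmax (Q i) := fun i => le_antisymm
    (bellman_le_aux p r α hp hsum hα0 hα1 (fun i => fmax (Q' i)) (fun i => fmax (Q i)) a2 b1 i)
    (bellman_le_aux p r α hp hsum hα0 hα1 (fun i => fmax (Q i)) (fun i => fmax (Q' i)) a1 b2 i)
  intro i c hc
  rw [← e2 i c]
  simp only [hV]
  rw [e1, ← hc]
  ring
end

section
/- Let 0 < w ≤ w* and let Q' : S×A → ℝ be a fixed point of H_w (H_w Q' = Q'). Then for every Q : S×A → ℝ and every (i,a) ∈ S×A, |∑_{j∈S} p(j|i,a)·[w·(r̄(i,a,j) + α·max_{b∈A} Q(j,b) − Q'(i,a)) + (1−w)·(max_{c∈A} Q(i,c) − Q'(i,a))]| ≤ (w·α + 1 − w)·‖Q − Q'‖. -/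
open Finset

theorem aux_fmax_le {A : Type*} [Fintype A] [Nonempty A] (f g : A → ℝ) (N : ℝ)
    (h : ∀ a, |f a - g a| ≤ N) : fmax f - fmax g ≤ N := by
  have : fmax f ≤ N + fmax g := by
    refine Finset.sup'_le _ _ (fun b _ => ?_)
    have h1 : g b ≤ fmax g := Finset.le_sup' g (Finset.mem_univ b)
    have h2 := (abs_le.mp (h b)).2
    linarith
  linarith

theorem aux_upper {S : Type*} [Fintype S] (p d : S → ℝ) (i : S) (α w N : ℝ)
    (hp : ∀ j, 0 ≤ p j) (hs : ∑ j, p j = 1) (hα : 0 ≤ α) (hw : 0 < w)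
    (hc : 0 ≤ w * α * p i + 1 - w) (hd : ∀ j, d j ≤ N) :
    w * α * ∑ j, p j * d j + (1 - w) * d i ≤ (w * α + 1 - w) * N := by
  have h1 : p i * (N - d i) ≤ ∑ j, p j * (N - d j) :=
    Finset.single_le_sum (f := fun j => p j * (N - d j))
      (fun j _ => mul_nonneg (hp j) (sub_nonneg.mpr (hd j))) (Finset.mem_univ i)
  have h2 : ∑ j, p j * (N - d j) = N - ∑ j, p j * d j := by
    simp only [mul_sub, Finset.sum_sub_distrib, ← Finset.sum_mul, hs, one_mul]
  rw [h2] at h1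
  have h3 := mul_le_mul_of_nonneg_left h1 (mul_nonneg hw.le hα)
  have h4 := mul_nonneg hc (sub_nonneg.mpr (hd i))
  nlinarith

/-- If `0 < w ≤ w*` and `Q'` is a fixed point of `H_w`, then the expected SOR Q-learning
increment is bounded by the contraction factor times the sup-norm distance to `Q'`. -/
theorem expected_increment_bound {S A : Type*} [Fintype S] [Fintype A]
    [Nonempty S] [Nonempty A]
    (p : S → A → S → ℝ) (rb : S → A → S → ℝ) (α : ℝ)
    (hp : ∀ i a j, 0 ≤ p i a j) (hsum : ∀ i a, ∑ j, p i a j = 1)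
    (hα0 : 0 ≤ α) (hα1 : α < 1)
    (w : ℝ) (hw0 : 0 < w) (hw : w ≤ wstar p α)
    (Q' : S → A → ℝ) (hQ' : Hw p (fun i a => ∑ j, p i a j * rb i a j) α w Q' = Q') :
    ∀ (Q : S → A → ℝ) (i : S) (a : A),
      |∑ j, p i a j *
          (w * (rb i a j + α * fmax (Q j) - Q' i a) + (1 - w) * (fmax (Q i) - Q' i a))| ≤
        (w * α + 1 - w) * supNorm (fun ia : S × A => Q ia.1 ia.2 - Q' ia.1 ia.2) := by
  intro Q i a
  set N := supNorm (fun ia : S × A => Q ia.1 ia.2 - Q' ia.1 ia.2) with hN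
  have hQ : ∀ j b, |Q j b - Q' j b| ≤ N := fun j b =>
    Finset.le_sup' (fun ia : S × A => |Q ia.1 ia.2 - Q' ia.1 ia.2|) (Finset.mem_univ (j, b))
  have hd1 : ∀ j, fmax (Q j) - fmax (Q' j) ≤ N := fun j => aux_fmax_le _ _ _ (hQ j)
  have hd2 : ∀ j, -(fmax (Q j) - fmax (Q' j)) ≤ N := fun j => by
    rw [neg_sub]
    exact aux_fmax_le _ _ _ (fun b => by rw [abs_sub_comm]; exact hQ j b)
  have hpi : p i a i ≤ 1 := by
    rw [← hsum i a]
    exact Finset.single_le_sum (fun j _ => hp i a j) (Finset.mem_univ i)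
  have hpos : 0 < 1 - α * p i a i := by nlinarith [hp i a i]
  have hwi : w ≤ 1 / (1 - α * p i a i) := hw.trans
    (Finset.inf'_le (fun ia : S × A => 1 / (1 - α * p ia.1 ia.2 ia.1)) (Finset.mem_univ (i, a)))
  rw [le_div_iff₀ hpos] at hwi
  have hc : 0 ≤ w * α * p i a i + 1 - w := by linarith
  have hfix := congrFun (congrFun hQ' i) a
  simp only [Hw] at hfix
  have key : ∑ j, p i a j *
      (w * (rb i a j + α * fmax (Q j) - Q' i a) + (1 - w) * (fmax (Q i) - Q' i a))
      = w * α * ∑ j, p i a j * (fmax (Q j) - fmax (Q' j))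
        + (1 - w) * (fmax (Q i) - fmax (Q' i)) := by
    have e1 : ∑ j, p i a j *
        (w * (rb i a j + α * fmax (Q j) - Q' i a) + (1 - w) * (fmax (Q i) - Q' i a))
        = w * ∑ j, p i a j * rb i a j + w * α * ∑ j, p i a j * fmax (Q j)
          + (∑ j, p i a j) * ((1 - w) * fmax (Q i) - Q' i a) := by
      rw [Finset.mul_sum, Finset.mul_sum, Finset.sum_mul, ← Finset.sum_add_distrib,
        ← Finset.sum_add_distrib]
      exact Finset.sum_congr rfl (fun j _ => by ring)
    rw [e1, hsum]
    simp only [mul_sub (p i a _), Finset.sum_sub_distrib]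
    linarith
  rw [key, abs_le]
  constructor
  · have h := aux_upper (p i a) (fun j => -(fmax (Q j) - fmax (Q' j))) i α w N
      (hp i a) (hsum i a) hα0 hw0 hc hd2
    simp only [mul_neg, Finset.sum_neg_distrib] at h
    linarith
  · exact aux_upper (p i a) (fun j => fmax (Q j) - fmax (Q' j)) i α w N
      (hp i a) (hsum i a) hα0 hw0 hc hd1
end

section
/- Suppose |r̄(i,a,j)| ≤ B for all (i,a,j). Then for every w ∈ ℝ, every Q : S×A → ℝ and every (i,a) ∈ S×A, the conditional second moment of the SOR Q-learning noise is bounded: ∑_{j∈S} p(j|i,a)·(w·(r̄(i,a,j) + α·max_{b∈A} Q(j,b)) + (1−w)·max_{c∈A} Q(i,c) − (H_w Q)(i,a))² ≤ 3·(w²·B² + α²·w²·‖Q‖² + (1−w)²·‖Q‖²). -/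
open Finset

theorem fmax_abs_le_aux {S A : Type*} [Fintype S] [Fintype A] [Nonempty S] [Nonempty A]
    (Q : S → A → ℝ) (j : S) :
    |fmax (Q j)| ≤ supNorm (fun ia : S × A => Q ia.1 ia.2) := by
  obtain ⟨b, -, hb⟩ := Finset.exists_mem_eq_sup' (Finset.univ_nonempty (α := A)) (Q j)
  unfold supNorm
  unfold fmax
  rw [hb]
  exact Finset.le_sup' (fun ia : S × A => |Q ia.1 ia.2|) (Finset.mem_univ (j, b))

theorem var_le_aux {S : Type*} [Fintype S] (p x : S → ℝ) (C : ℝ)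
    (hp : ∀ j, 0 ≤ p j) (hs : ∑ j, p j = 1) (hx : ∀ j, x j ^ 2 ≤ C) :
    ∑ j, p j * (x j - ∑ k, p k * x k) ^ 2 ≤ C := by
  obtain ⟨m, hm⟩ : ∃ m, m = ∑ k, p k * x k := ⟨_, rfl⟩
  rw [← hm]
  have h1 : ∑ j, p j * (x j - m) ^ 2 = ∑ j, p j * x j ^ 2 - 2 * m * ∑ j, p j * x j
      + m ^ 2 * ∑ j, p j := by
    rw [Finset.mul_sum, Finset.mul_sum, ← Finset.sum_sub_distrib, ← Finset.sum_add_distrib]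
    exact Finset.sum_congr rfl fun j _ => by ring
  have h2 : ∑ j, p j * x j ^ 2 ≤ ∑ j, p j * C :=
    Finset.sum_le_sum fun j _ => mul_le_mul_of_nonneg_left (hx j) (hp j)
  rw [← Finset.sum_mul, hs] at h2
  rw [h1, ← hm, hs]
  nlinarith [sq_nonneg m]

/-- Conditional second moment bound for the SOR Q-learning noise. -/
theorem noise_second_moment_bound {S A : Type*} [Fintype S] [Fintype A]
    [Nonempty S] [Nonempty A]
    (p : S → A → S → ℝ) (rb : S → A → S → ℝ) (α B : ℝ)
    (hp : ∀ i a j, 0 ≤ p i a j) (hsum : ∀ i a, ∑ j, p i a j = 1)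
    (hα0 : 0 ≤ α) (hα1 : α < 1)
    (hB : 0 ≤ B) (hr : ∀ i a j, |rb i a j| ≤ B) :
    ∀ (w : ℝ) (Q : S → A → ℝ) (i : S) (a : A),
      ∑ j, p i a j *
          (w * (rb i a j + α * fmax (Q j)) + (1 - w) * fmax (Q i) -
            Hw p (fun i a => ∑ j, p i a j * rb i a j) α w Q i a) ^ 2 ≤
        3 * (w ^ 2 * B ^ 2 + α ^ 2 * w ^ 2 * (supNorm (fun ia : S × A => Q ia.1 ia.2)) ^ 2 +
          (1 - w) ^ 2 * (supNorm (fun ia : S × A => Q ia.1 ia.2)) ^ 2) := by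
  intro w Q i a
  have hN := fmax_abs_le_aux Q
  set N := supNorm (fun ia : S × A => Q ia.1 ia.2)
  have key := var_le_aux (p i a) (fun j => w * (rb i a j + α * fmax (Q j)))
    (2 * (w ^ 2 * B ^ 2 + α ^ 2 * w ^ 2 * N ^ 2)) (hp i a) (hsum i a) (by
      intro j
      have h1 : rb i a j ^ 2 ≤ B ^ 2 := sq_le_sq.2 ((hr i a j).trans (le_abs_self B))
      have h2 : fmax (Q j) ^ 2 ≤ N ^ 2 := sq_le_sq.2 ((hN j).trans (le_abs_self N))
      have h3 := mul_le_mul_of_nonneg_left h1 (sq_nonneg w)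
      have h4 := mul_le_mul_of_nonneg_left h2 (sq_nonneg (α * w))
      have h5 := sq_nonneg (w * rb i a j - α * w * fmax (Q j))
      nlinarith)
  have hm : ∑ k, p i a k * (w * (rb i a k + α * fmax (Q k))) =
      w * (∑ j, p i a j * rb i a j + α * ∑ j, p i a j * fmax (Q j)) := by
    rw [Finset.mul_sum (a := α), ← Finset.sum_add_distrib, Finset.mul_sum]
    exact Finset.sum_congr rfl fun j _ => by ring
  simp only [hm] at key
  have he : ∀ j, w * (rb i a j + α * fmax (Q j)) + (1 - w) * fmax (Q i) -
            Hw p (fun i a => ∑ j, p i a j * rb i a j) α w Q i a =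
      w * (rb i a j + α * fmax (Q j)) -
      w * (∑ j, p i a j * rb i a j + α * ∑ j, p i a j * fmax (Q j)) := by
    intro j
    unfold Hw
    ring
  simp only [he]
  refine key.trans ?_
  have := mul_nonneg (sq_nonneg w) (sq_nonneg B)
  have := mul_nonneg (sq_nonneg (α * w)) (sq_nonneg N)
  have := mul_nonneg (sq_nonneg (1 - w)) (sq_nonneg N)
  nlinarith
end

section
/- For every real w with 0 < w ≤ w*, the SOR value-iteration operator T_w is a max-norm contraction with factor (w·α + 1 − w): for all U, V : S → ℝ, ‖T_w U − T_w V‖ ≤ (w·α + 1 − w)·‖U − V‖. -/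
open Finset

/-- The SOR value-iteration operator `T_w`. -/
noncomputable def Tw {S A : Type*} [Fintype S] [Fintype A] [Nonempty S] [Nonempty A]
    (p : S → A → S → ℝ) (r : S → A → ℝ) (α w : ℝ) (V : S → ℝ) : S → ℝ :=
  fun i => w * fmax (fun a => r i a + α * ∑ j, p i a j * V j) + (1 - w) * V i

theorem Tw_one_sided {S A : Type*} [Fintype S] [Fintype A] [Nonempty S] [Nonempty A]
    (p : S → A → S → ℝ) (r : S → A → ℝ) (α : ℝ)
    (hp : ∀ i a j, 0 ≤ p i a j) (hsum : ∀ i a, ∑ j, p i a j = 1)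
    (hα0 : 0 ≤ α) (hα1 : α < 1)
    (w : ℝ) (hw0 : 0 < w) (hw : w ≤ wstar p α) (U V : S → ℝ) (D : ℝ)
    (hD : ∀ j, U j - V j ≤ D) (i : S) :
    Tw p r α w U i - Tw p r α w V i ≤ (w * α + 1 - w) * D := by
  obtain ⟨a, -, ha⟩ := Finset.exists_mem_eq_sup' (Finset.univ_nonempty (α := A))
    (fun a => r i a + α * ∑ j, p i a j * U j)
  have hV : r i a + α * ∑ j, p i a j * V j ≤ fmax (fun a => r i a + α * ∑ j, p i a j * V j) :=
    Finset.le_sup' (fun a => r i a + α * ∑ j, p i a j * V j) (Finset.mem_univ a)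
  have hU : fmax (fun a => r i a + α * ∑ j, p i a j * U j) = r i a + α * ∑ j, p i a j * U j := ha
  have hpi : p i a i ≤ 1 := by
    rw [← hsum i a]
    exact Finset.single_le_sum (fun j _ => hp i a j) (Finset.mem_univ i)
  have hw1 : w ≤ 1 / (1 - α * p i a i) :=
    hw.trans (Finset.inf'_le (fun ia : S × A => 1 / (1 - α * p ia.1 ia.2 ia.1))
      (Finset.mem_univ (i, a)))
  have hpos : 0 < 1 - α * p i a i := by nlinarith [hp i a i]
  have hc : w * (1 - α * p i a i) ≤ 1 := (le_div_iff₀ hpos).1 hw1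
  have hs : p i a i * (D - (U i - V i)) ≤ ∑ j, p i a j * (D - (U j - V j)) :=
    Finset.single_le_sum (f := fun j => p i a j * (D - (U j - V j)))
      (fun j _ => mul_nonneg (hp i a j) (sub_nonneg.2 (hD j))) (Finset.mem_univ i)
  have he : ∑ j, p i a j * (D - (U j - V j))
      = D - (∑ j, p i a j * U j - ∑ j, p i a j * V j) := by
    simp only [mul_sub, Finset.sum_sub_distrib, ← Finset.sum_mul, hsum, one_mul]
  rw [he] at hs
  have h1 := mul_le_mul_of_nonneg_left hs (mul_nonneg hw0.le hα0)
  have h2 := mul_le_mul_of_nonneg_left hV hw0.le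
  have h3 := mul_nonneg (sub_nonneg.2 hc) (sub_nonneg.2 (hD i))
  unfold Tw
  rw [hU]
  nlinarith

/-- For `0 < w ≤ w*`, the SOR value-iteration operator `T_w` is a max-norm contraction with
factor `w·α + 1 - w`. -/
theorem Tw_contraction {S A : Type*} [Fintype S] [Fintype A] [Nonempty S] [Nonempty A]
    (p : S → A → S → ℝ) (r : S → A → ℝ) (α : ℝ)
    (hp : ∀ i a j, 0 ≤ p i a j) (hsum : ∀ i a, ∑ j, p i a j = 1)
    (hα0 : 0 ≤ α) (hα1 : α < 1)
    (w : ℝ) (hw0 : 0 < w) (hw : w ≤ wstar p α) :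
    ∀ U V : S → ℝ,
      supNorm (fun i => Tw p r α w U i - Tw p r α w V i) ≤
        (w * α + 1 - w) * supNorm (fun i => U i - V i) := by
  intro U V
  have hD : ∀ j, |U j - V j| ≤ supNorm (fun i => U i - V i) := fun j =>
    Finset.le_sup' (fun i => |U i - V i|) (Finset.mem_univ j)
  refine Finset.sup'_le Finset.univ_nonempty _ fun i _ => ?_
  rw [abs_le']
  refine ⟨Tw_one_sided p r α hp hsum hα0 hα1 w hw0 hw U V _
    (fun j => (le_abs_self _).trans (hD j)) i, ?_⟩
  rw [neg_sub]
  exact Tw_one_sided p r α hp hsum hα0 hα1 w hw0 hw V U _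
    (fun j => by rw [← neg_sub]; exact (neg_le_abs _).trans (hD j)) i
end
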